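/- Let G be a finite Frobenius group with Frobenius complement B, i.e., B is a proper nontrivial subgroup of G with B ∩ gBg⁻¹ = {1} for all g ∈ G \ B. Then (Frobenius's theorem) G has a normal subgroup N (the Frobenius kernel) with G = N ⋊ B, and the conjugation action of B on N is fixed-point-free. -/

import Mathlib

/-!
Inducing class functions of `B` that vanish at `1` is an isometry which, on `B`, undoes restriction,
because distinct conjugates of `B` meet trivially. Writing `f = (f - f 1) + f 1` and inducing only
the first summand therefore extends an irreducible character `f` of `B` to a virtual character of
`G` of norm one and positive degree, hence to a genuine character. It takes the value `f 1` at all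
elements outside the conjugates of `B \ {1}`, so these act trivially in the representation it
affords, while a given `b ≠ 1` in `B` acts nontrivially for a suitable `f`. Thus the normal closure
of these elements meets `B` trivially, and counting shows that it is a complement of `B`.
-/

open Module Representation
open scoped MonoidAlgebra

section Trace

theorem trace_eq_trace_restrict_add_trace_mapQ {K V : Type*} [Field K] [AddCommGroup V]
    [Module K V] [FiniteDimensional K V] (W : Submodule K V) (f : End K V)
    (h : W ≤ W.comap f) :
    LinearMap.trace K V f =
      LinearMap.trace K W (f.restrict h) + LinearMap.trace K (V ⧸ W) (W.mapQ W f h) := by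
  obtain ⟨s, hs⟩ := W.mkQ.exists_rightInverse_of_surjective W.range_mkQ
  have mkQ_s (x : V ⧸ W) : W.mkQ (s x) = x := LinearMap.congr_fun hs x
  let p : V →ₗ[K] W := (LinearMap.id - s ∘ₗ W.mkQ).codRestrict W fun v ↦ by
    rw [← Submodule.Quotient.mk_eq_zero, ← W.mkQ_apply]
    simp only [LinearMap.sub_apply, LinearMap.id_apply, LinearMap.comp_apply, map_sub, mkQ_s,
      sub_self]
  have p_coe (w : W) : p w = w := by
    ext
    simp [p, (Submodule.Quotient.mk_eq_zero W).2 w.2]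
  have decomp : f = (f ∘ₗ W.subtype) ∘ₗ p + (f ∘ₗ s) ∘ₗ W.mkQ := by
    ext v
    simp [p]
  have trace_sub : p ∘ₗ f ∘ₗ W.subtype = f.restrict h :=
    LinearMap.ext fun w ↦ p_coe ⟨f w, h w.2⟩
  have trace_quot : W.mkQ ∘ₗ f ∘ₗ s = W.mapQ W f h :=
    LinearMap.ext fun x ↦ congr(W.mapQ W f h $(mkQ_s x))
  conv_lhs => rw [decomp]
  rw [map_add, LinearMap.trace_comp_comm', LinearMap.trace_comp_comm' _ (f ∘ₗ s), trace_sub,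
    trace_quot]

theorem trace_pi_eq_sum_trace {R M ι : Type*} [CommRing R] [AddCommGroup M] [Module R M]
    [Module.Free R M] [Module.Finite R M] [Fintype ι] [DecidableEq ι] (f : End R (ι → M)) :
    LinearMap.trace R (ι → M) f = ∑ i,
      LinearMap.trace R M (LinearMap.proj i ∘ₗ f ∘ₗ LinearMap.single R (fun _ ↦ M) i) := by
  have decomp : f = ∑ i, (f ∘ₗ LinearMap.single R (fun _ ↦ M) i) ∘ₗ LinearMap.proj i := by
    refine LinearMap.ext fun v ↦ ?_
    simp [← map_sum, LinearMap.sum_apply, Finset.univ_sum_single]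
  conv_lhs => rw [decomp]
  rw [map_sum]
  exact Finset.sum_congr rfl fun i _ ↦ LinearMap.trace_comp_comm' _ _

theorem trace_restrict_eq_trace_comp_of_isProj {K V : Type*} [Field K] [AddCommGroup V]
    [Module K V] [FiniteDimensional K V] {W : Submodule K V} {p : End K V}
    (hp : LinearMap.IsProj W p) (f : End K V) (hf : ∀ v ∈ W, f v ∈ W) :
    LinearMap.trace K W (f.restrict hf) = LinearMap.trace K V (f ∘ₗ p) := by
  rw [← LinearMap.trace_restrict_eq_of_forall_mem W _ fun v ↦ hf (p v) (hp.map_mem v)]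
  congr 1
  ext w
  simp [hp.map_id]

end Trace

section ClassFunction

variable {k G : Type*} [Field k] [Group G]

/-- Functions on a group that are constant on conjugacy classes. -/
def IsClassFunction (f : G → k) : Prop :=
  ∀ g t : G, f (t * g * t⁻¹) = f g

variable [Fintype G]

/-- The bilinear form `⟨f, h⟩ = |G|⁻¹ ∑ f(g) h(g⁻¹)`, which on characters agrees with the usual
Hermitian product. -/
noncomputable def charInner : LinearMap.BilinForm k (G → k) :=
  LinearMap.mk₂ k (fun f h ↦ (Nat.card G : k)⁻¹ * ∑ g, f g * h g⁻¹)
    (by simp [add_mul, mul_add, Finset.sum_add_distrib])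
    (by simp [Finset.mul_sum, mul_left_comm, mul_assoc])
    (by simp [mul_add, Finset.sum_add_distrib])
    (by simp [Finset.mul_sum, mul_left_comm])

theorem charInner_apply (f h : G → k) :
    charInner f h = (Nat.card G : k)⁻¹ * ∑ g, f g * h g⁻¹ :=
  rfl

theorem charInner_comm (f h : G → k) : charInner f h = charInner h f := by
  simp only [charInner_apply]
  rw [← Equiv.sum_comp (Equiv.inv G)]
  simp [mul_comm]

theorem charInner_one_one [CharZero k] : charInner (1 : G → k) 1 = 1 := by
  simp [charInner_apply]

theorem charInner_character [CharZero k] {V W : Type*} [AddCommGroup V] [Module k V]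
    [FiniteDimensional k V] [AddCommGroup W] [Module k W] [FiniteDimensional k W]
    (ρ : Representation k G V) (σ : Representation k G W) :
    charInner σ.character ρ.character = finrank k (IntertwiningMap ρ σ) := by
  have : Invertible (Nat.card G : k) := invertibleOfNonzero (Nat.cast_ne_zero.2 Nat.card_pos.ne')
  exact card_inv_mul_sum_char_mul_char_eq_finrank ρ σ

end ClassFunction

section Character

variable {k G : Type*} [Field k] [Group G] {V W : Type*} [AddCommGroup V] [Module k V]
  [FiniteDimensional k V] [AddCommGroup W] [Module k W] [FiniteDimensional k W]

theorem char_eq_char_subrepresentation_add_char_quotient (ρ : Representation k G V)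
    (U : Submodule k V) (h : ∀ g, U ≤ U.comap (ρ g)) :
    ρ.character = (ρ.subrepresentation U h).character + (ρ.quotient U h).character :=
  funext fun g ↦ trace_eq_trace_restrict_add_trace_mapQ U (ρ g) (h g)

theorem char_sub_char_eq_char_ker_sub_char_coker {ρ : Representation k G V}
    {σ : Representation k G W} (T : IntertwiningMap ρ σ) :
    ρ.character - σ.character =
      (ρ.subrepresentation T.ker.toSubmodule T.ker.apply_mem_toSubmodule).character -
        (σ.quotient T.range.toSubmodule T.range.apply_mem_toSubmodule).character := by
  have coimage_equiv_image :
      (ρ.quotient T.ker.toSubmodule T.ker.apply_mem_toSubmodule).Equiv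
        (σ.subrepresentation T.range.toSubmodule T.range.apply_mem_toSubmodule) := by
    refine .mk T.toLinearMap.quotKerEquivRange fun g ↦ ?_
    refine LinearMap.ext fun x ↦ ?_
    obtain ⟨v, rfl⟩ := Submodule.mkQ_surjective _ x
    exact Subtype.ext (IntertwiningMap.isIntertwining (f := T) ..)
  rw [char_eq_char_subrepresentation_add_char_quotient ρ _ T.ker.apply_mem_toSubmodule,
    char_eq_char_subrepresentation_add_char_quotient σ _ T.range.apply_mem_toSubmodule,
    char_iso coimage_equiv_image]
  abel

theorem char_trivial (g : G) :
    (Representation.trivial k G V).character g = finrank k V := by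
  simp [character, Representation.trivial]

theorem char_prod (ρ : Representation k G V) (σ : Representation k G W) :
    (ρ.prod σ).character = ρ.character + σ.character :=
  funext fun g ↦ LinearMap.trace_prodMap' (ρ g) (σ g)

theorem apply_eq_one_iff_char_zpow [Finite G] [CharZero k] (ρ : Representation k G V) (g : G) :
    ρ g = 1 ↔ ∀ i : ℤ, ρ.character (g ^ i) = ρ.character 1 := by
  refine ⟨fun h i ↦ ?_, fun h ↦ ?_⟩
  · have : ρ (g ^ i) = 1 := zpow_mem (K := ρ.ker) h i
    rw [character, character, this, map_one ρ]
  let H := Subgroup.zpowers g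
  let σ : Representation k H V := ρ.comp H.subtype
  have := Fintype.ofFinite H
  have card_ne_zero : (Nat.card H : k) ≠ 0 := Nat.cast_ne_zero.2 Nat.card_pos.ne'
  have : Invertible (Nat.card H : k) := invertibleOfNonzero card_ne_zero
  have char_σ (x : H) : σ.character x = finrank k V := by
    obtain ⟨_, i, rfl⟩ := x
    rw [← char_one ρ, ← h i]
    rfl
  have finrank_invariants : finrank k V = finrank k (invariants σ) := by
    have := card_inv_mul_sum_char_eq_finrank σ
    simp only [char_σ, Finset.sum_const, Finset.card_univ, nsmul_eq_mul,
      Fintype.card_eq_nat_card, inv_mul_cancel_left₀ card_ne_zero] at this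
    exact_mod_cast this
  have invariants_eq_top : invariants σ = ⊤ :=
    Submodule.eq_top_of_finrank_eq finrank_invariants.symm
  ext v
  have : v ∈ invariants σ := invariants_eq_top ▸ Submodule.mem_top
  exact this ⟨g, Subgroup.mem_zpowers g⟩

/-- The function `f` is the character of a finite-dimensional representation. The carrier is
taken to be some `Fin n → k` in order not to quantify over a universe. -/
def IsCharacter (f : G → k) : Prop :=
  ∃ (n : ℕ) (ρ : Representation k G (Fin n → k)), ρ.character = f

theorem exists_fin_finrank_character_eq (ρ : Representation k G V) :
    ∃ σ : Representation k G (Fin (finrank k V) → k), σ.character = ρ.character := by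
  let e := (finBasis k V).equivFun
  exact ⟨(e.conjAlgEquiv k : _ →* _).comp ρ, funext fun g ↦ LinearMap.trace_conj' (ρ g) e⟩

theorem IsCharacter.isClassFunction {f : G → k} (hf : IsCharacter f) : IsClassFunction f := by
  obtain ⟨_, ρ, rfl⟩ := hf
  exact char_conj ρ

theorem IsCharacter.exists_apply_one_eq_natCast {f : G → k} (hf : IsCharacter f) :
    ∃ n : ℕ, f 1 = n := by
  obtain ⟨n, ρ, rfl⟩ := hf
  exact ⟨_, char_one ρ⟩

theorem isCharacter_character (ρ : Representation k G V) : IsCharacter ρ.character :=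
  ⟨_, exists_fin_finrank_character_eq ρ⟩

theorem IsCharacter.add {f h : G → k} (hf : IsCharacter f) (hh : IsCharacter h) :
    IsCharacter (f + h) := by
  obtain ⟨_, ρ, rfl⟩ := hf
  obtain ⟨_, σ, rfl⟩ := hh
  exact char_prod ρ σ ▸ isCharacter_character _

theorem isCharacter_natCast (n : ℕ) : IsCharacter (n : G → k) :=
  ⟨n, .trivial k G _, funext fun g ↦ by simp [char_trivial]⟩

/-- Differences of two characters. -/
def IsVirtualCharacter (f : G → k) : Prop :=
  ∃ a b : G → k, IsCharacter a ∧ IsCharacter b ∧ f = a - b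

-- Replacing `ρ` and `σ` by the kernel and cokernel of an intertwining map does not change the
-- difference of the characters, so a decomposition with `ρ` of least dimension has `Hom(ρ, σ) = 0`.
theorem IsVirtualCharacter.exists_subsingleton_intertwiningMap {f : G → k}
    (hf : IsVirtualCharacter f) :
    ∃ (n m : ℕ) (ρ : Representation k G (Fin n → k)) (σ : Representation k G (Fin m → k)),
      f = ρ.character - σ.character ∧ Subsingleton (IntertwiningMap ρ σ) := by
  classical
  have decomposable : ∃ (n m : ℕ) (ρ : Representation k G (Fin n → k))
      (σ : Representation k G (Fin m → k)), f = ρ.character - σ.character := by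
    obtain ⟨_, _, ⟨n, ρ, rfl⟩, ⟨m, σ, rfl⟩, rfl⟩ := hf
    exact ⟨n, m, ρ, σ, rfl⟩
  obtain ⟨m, ρ, σ, hf⟩ := Nat.find_spec decomposable
  refine ⟨_, m, ρ, σ, hf, subsingleton_of_forall_eq 0 fun T ↦ ?_⟩
  by_contra T_ne_zero
  have finrank_ker_lt : finrank k T.ker.toSubmodule < Nat.find decomposable := by
    have ker_ne_top : T.ker.toSubmodule ≠ ⊤ := fun h ↦
      T_ne_zero (IntertwiningMap.ext (LinearMap.ker_eq_top.1 h))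
    simpa using Submodule.finrank_lt ker_ne_top
  obtain ⟨ρ', hρ'⟩ := exists_fin_finrank_character_eq
    (ρ.subrepresentation T.ker.toSubmodule T.ker.apply_mem_toSubmodule)
  obtain ⟨σ', hσ'⟩ := exists_fin_finrank_character_eq
    (σ.quotient T.range.toSubmodule T.range.apply_mem_toSubmodule)
  refine Nat.find_min decomposable finrank_ker_lt ⟨_, ρ', σ', hf.trans ?_⟩
  rw [char_sub_char_eq_char_ker_sub_char_coker T, hρ', hσ']

theorem char_eq_zero_of_finrank_intertwiningMap_self_eq_zero {ρ : Representation k G V}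
    (h : finrank k (IntertwiningMap ρ ρ) = 0) : ρ.character = 0 := by
  have : Module.Finite k (IntertwiningMap ρ ρ) := .equiv (invariantsEquivIntertwiningMap ρ ρ)
  have : Subsingleton (IntertwiningMap ρ ρ) := finrank_zero_iff.1 h
  have : Subsingleton V := subsingleton_of_forall_eq 0 fun v ↦
    congr($(Subsingleton.elim (IntertwiningMap.id ρ) 0) v)
  funext g
  rw [character, Subsingleton.elim (ρ g) 0, map_zero, Pi.zero_apply]

theorem IsVirtualCharacter.isCharacter_or_isCharacter_neg [Fintype G] [CharZero k] {f : G → k}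
    (hf : IsVirtualCharacter f) (hnorm : charInner f f = 1) :
    IsCharacter f ∨ IsCharacter (-f) := by
  obtain ⟨n, m, ρ, σ, rfl, _⟩ := hf.exists_subsingleton_intertwiningMap
  have orthogonal : charInner σ.character ρ.character = 0 := by
    rw [charInner_character, finrank_zero_of_subsingleton, Nat.cast_zero]
  have finrank_add : finrank k (IntertwiningMap ρ ρ) + finrank k (IntertwiningMap σ σ) = 1 := by
    simp only [map_sub, LinearMap.sub_apply, charInner_comm ρ.character σ.character,
      orthogonal, charInner_character, sub_zero, zero_sub, sub_neg_eq_add] at hnorm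
    exact_mod_cast hnorm
  obtain ⟨hρ, -⟩ | ⟨-, hσ⟩ := Nat.add_eq_one_iff.1 finrank_add
  · right
    rw [char_eq_zero_of_finrank_intertwiningMap_self_eq_zero hρ, zero_sub, neg_neg]
    exact isCharacter_character σ
  · left
    rw [char_eq_zero_of_finrank_intertwiningMap_self_eq_zero hσ, sub_zero]
    exact isCharacter_character ρ

theorem IsVirtualCharacter.isCharacter_of_apply_one [Fintype G] [CharZero k] {f : G → k}
    (hf : IsVirtualCharacter f) (hnorm : charInner f f = 1) {d : ℕ} (hd : f 1 = d) :
    IsCharacter f := by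
  refine (hf.isCharacter_or_isCharacter_neg hnorm).resolve_right ?_
  rintro ⟨n, ρ, hρ⟩
  have n_add_d : (n + d : k) = 0 := by
    have : ρ.character 1 = -f 1 := congrFun hρ 1
    rwa [char_one, finrank_fin_fun, hd, eq_neg_iff_add_eq_zero] at this
  obtain ⟨rfl, -⟩ : n = 0 ∧ d = 0 := by
    norm_cast at n_add_d
    exact add_eq_zero.1 n_add_d
  have f_eq_zero : f = 0 := by
    rw [← neg_eq_zero, ← hρ]
    exact funext fun g ↦ by rw [character, Subsingleton.elim (ρ g) 0, map_zero, Pi.zero_apply]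
  simp [f_eq_zero] at hnorm

end Character

open MonoidAlgebra in
theorem exists_isSimpleModule_leftIdeal_single_smul_ne {k G : Type*} [Field k] [Group G]
    [Finite G] [NeZero (Nat.card G : k)] {g : G} (hg : g ≠ 1) :
    ∃ I : Submodule k[G] k[G], IsSimpleModule k[G] I ∧
      ∃ x : I, (single g 1 : k[G]) • x ≠ x := by
  by_contra! h
  have fixes_all (x : k[G]) : (single g 1 : k[G]) * x = x := by
    have mem_iSup : x ∈ ⨆ I : {I : Submodule k[G] k[G] // IsSimpleModule k[G] I}, I.1 := by
      have := IsSemisimpleModule.sSup_simples_eq_top k[G] k[G]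
      rw [sSup_eq_iSup'] at this
      exact this ▸ Submodule.mem_top
    refine Submodule.iSup_induction _ (motive := fun x ↦ single g 1 * x = x) mem_iSup
      (fun I x hx ↦ congrArg Subtype.val (h I.1 I.2 ⟨x, hx⟩)) (mul_zero _) fun x y hx hy ↦ ?_
    rw [mul_add, hx, hy]
  have single_eq : (single g 1 : k[G]) = single 1 1 := by
    simpa [one_def] using fixes_all 1
  exact hg (by simpa [single_left_inj] using single_eq)

theorem isIrreducible_ofModule' {k G : Type*} [Field k] [Group G] (M : Type*) [AddCommGroup M]
    [Module k M] [Module k[G] M] [IsScalarTower k k[G] M] [IsSimpleModule k[G] M] :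
    (ofModule' M : Representation k G M).IsIrreducible := by
  let e : (ofModule' M : Representation k G M).asModule ≃ₗ[k[G]] M :=
    { (ofModule' M : Representation k G M).asModuleEquiv with
      map_smul' := fun r x ↦ by
        have asAlgebraHom_eq : (ofModule' M : Representation k G M).asAlgebraHom =
            Algebra.lsmul k k M :=
          (MonoidAlgebra.lift k (End k M) G).apply_symm_apply _
        exact congr($asAlgebraHom_eq r x) }
  exact (irreducible_iff_isSimpleModule_asModule _).2 (.congr e)

theorem exists_isCharacter_charInner_self_eq_one_apply_zpow_ne {k G : Type*} [Field k]
    [IsAlgClosed k] [CharZero k] [Group G] [Fintype G] {g : G} (hg : g ≠ 1) :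
    ∃ f : G → k, IsCharacter f ∧ charInner f f = 1 ∧ ∃ i : ℤ, f (g ^ i) ≠ f 1 := by
  obtain ⟨I, hI, x, hx⟩ := exists_isSimpleModule_leftIdeal_single_smul_ne (k := k) hg
  let φ : Representation k G I := ofModule' I
  have : φ.IsIrreducible := isIrreducible_ofModule' I
  have : FiniteDimensional k I := Module.Finite.trans k[G] I
  refine ⟨φ.character, isCharacter_character φ, ?_, ?_⟩
  · rw [charInner_character, IsIrreducible.finrank_intertwiningMap_self, Nat.cast_one]
  · rw [← not_forall, ← apply_eq_one_iff_char_zpow]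
    exact fun h ↦ hx (LinearMap.congr_fun h x)

section Induced

variable {k G : Type*} [Field k] [Group G] {B : Subgroup G}

theorem sum_ite_eq_extend [Fintype B] [DecidableEq G] (f : B → k) (g : G) :
    ∑ b : B, (if (b : G) = g then f b else 0) = Function.extend B.subtype f 0 g := by
  by_cases hg : g ∈ B
  · lift g to B using hg
    classical
    simp only [Subtype.val_inj, Finset.sum_ite_eq', Finset.mem_univ, if_true]
    exact (B.subtype_injective.extend_apply f 0 g).symm
  · rw [Function.extend_apply' _ _ _ (by simpa using hg), Pi.zero_apply]
    exact Finset.sum_eq_zero fun b _ ↦ if_neg fun (h : (b : G) = g) ↦ hg (h ▸ b.2)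

theorem isProj_coindV [CharZero k] [Fintype B] {V : Type*} [AddCommGroup V] [Module k V]
    (φ : Representation k B V) :
    LinearMap.IsProj (coindV B.subtype φ) ((Nat.card B : k)⁻¹ •
      ∑ b : B, (φ b).compLeft G ∘ₗ LinearMap.funLeft k V ((b : G)⁻¹ * ·)) where
  map_mem F b x := by
    have (c : B) : φ (b * c) (F ((b * c : B)⁻¹ * (b * x))) = φ b (φ c (F ((c : G)⁻¹ * x))) := by
      simp [mul_assoc]
    simp only [LinearMap.smul_apply, LinearMap.sum_apply, LinearMap.comp_apply, Pi.smul_apply,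
      Finset.sum_apply, LinearMap.compLeft_apply, Function.comp_apply, LinearMap.funLeft_apply,
      B.subtype_apply, map_smul, map_sum, ← this]
    rw [← Equiv.sum_comp (Equiv.mulLeft b)]
    rfl
  map_id F hF := by
    funext x
    have (b : B) : φ b (F ((b : G)⁻¹ * x)) = F x := by
      rw [← hF b, B.subtype_apply, mul_inv_cancel_left]
    simp [LinearMap.sum_apply, LinearMap.funLeft, this, ← Nat.cast_smul_eq_nsmul k, smul_smul]

variable [Fintype G]

variable (B) in
/-- The function on `G` induced by a function on the subgroup `B`: extend by zero outside `B` and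
sum over all conjugates, counting each coset of `B` once. -/
noncomputable def inducedFun : (B → k) →ₗ[k] (G → k) :=
  (Nat.card B : k)⁻¹ • ∑ t : G,
    LinearMap.funLeft k k (fun g ↦ t * g * t⁻¹) ∘ₗ Function.ExtendByZero.linearMap k B.subtype

theorem inducedFun_apply (f : B → k) (g : G) :
    inducedFun B f g =
      (Nat.card B : k)⁻¹ * ∑ t : G, Function.extend B.subtype f 0 (t * g * t⁻¹) := by
  simp [inducedFun, LinearMap.funLeft]

theorem isClassFunction_inducedFun (f : B → k) : IsClassFunction (inducedFun B f) := fun g t ↦ by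
  simp only [inducedFun_apply]
  rw [← Equiv.sum_comp (Equiv.mulRight t)
    fun s ↦ Function.extend B.subtype f 0 (s * g * s⁻¹)]
  simp [mul_assoc]

theorem charInner_inducedFun [CharZero k] [Fintype B] (f : B → k) {h : G → k}
    (hh : IsClassFunction h) :
    charInner (inducedFun B f) h = charInner f (h ∘ B.subtype) := by
  have sum_extend : ∑ b, f b * h (b : G)⁻¹ =
      ∑ g, Function.extend B.subtype f 0 g * h g⁻¹ := by
    refine Fintype.sum_of_injective _ B.subtype_injective _ _ (fun g hg ↦ ?_) fun b ↦ ?_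
    · rw [Function.extend_apply' _ _ _ hg, Pi.zero_apply, zero_mul]
    · rw [B.subtype_injective.extend_apply, B.subtype_apply]
  have sum_conj (t : G) : ∑ g, Function.extend B.subtype f 0 (t * g * t⁻¹) * h g⁻¹ =
      ∑ b, f b * h (b : G)⁻¹ := by
    refine (Fintype.sum_equiv (MulAut.conj t).toEquiv _ _ fun g ↦ ?_).trans sum_extend.symm
    rw [← hh g⁻¹ t, ← conj_inv]
    rfl
  calc
    charInner (inducedFun B f) h
    _ = (Nat.card G : k)⁻¹ * ((Nat.card B : k)⁻¹ * ∑ t : G, ∑ g : G,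
          Function.extend B.subtype f 0 (t * g * t⁻¹) * h g⁻¹) := by
      simp only [charInner_apply, inducedFun_apply, Finset.mul_sum, Finset.sum_mul, mul_assoc]
      rw [Finset.sum_comm]
    _ = (Nat.card B : k)⁻¹ * ∑ b, f b * h (b : G)⁻¹ := by
      simp only [sum_conj, Finset.sum_const, Finset.card_univ, nsmul_eq_mul,
        Fintype.card_eq_nat_card]
      field_simp

theorem char_coind_eq_inducedFun [CharZero k] {V : Type*} [AddCommGroup V] [Module k V]
    [FiniteDimensional k V] (φ : Representation k B V) :
    (coind B.subtype φ).character = inducedFun B φ.character := by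
  classical
  have := Fintype.ofFinite B
  funext g
  have block (x : G) (b : B) : LinearMap.proj x ∘ₗ (LinearMap.funLeft k V (· * g) ∘ₗ
      (φ b).compLeft G ∘ₗ LinearMap.funLeft k V ((b : G)⁻¹ * ·)) ∘ₗ
        LinearMap.single k (fun _ ↦ V) x = if (b : G) = x * g * x⁻¹ then φ b else 0 := by
    have : (b : G)⁻¹ * (x * g) = x ↔ (b : G) = x * g * x⁻¹ := by
      rw [inv_mul_eq_iff_eq_mul, eq_mul_inv_iff_mul_eq, eq_comm]
    ext v
    simp only [← this]
    split_ifs with h <;> simp [LinearMap.funLeft, h]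
  calc
    _ = LinearMap.trace k (G → V) (LinearMap.funLeft k V (· * g) ∘ₗ _) :=
      trace_restrict_eq_trace_comp_of_isProj (isProj_coindV φ) _ fun F hF ↦
        (coind B.subtype φ g ⟨F, hF⟩).2
    _ = (Nat.card B : k)⁻¹ * ∑ x : G, ∑ b : B,
          if (b : G) = x * g * x⁻¹ then φ.character b else 0 := by
      rw [LinearMap.comp_smul, ← Module.End.mul_eq_comp, Finset.mul_sum, map_smul, map_sum,
        smul_eq_mul]
      simp only [Module.End.mul_eq_comp, trace_pi_eq_sum_trace, block,
        apply_ite (LinearMap.trace k V), map_zero, character]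
      rw [Finset.sum_comm]
    _ = _ := by simp only [sum_ite_eq_extend, inducedFun_apply]

theorem isCharacter_inducedFun [CharZero k] {f : B → k} (hf : IsCharacter f) :
    IsCharacter (inducedFun B f) := by
  obtain ⟨n, φ, rfl⟩ := hf
  exact char_coind_eq_inducedFun φ ▸ isCharacter_character _

end Induced

section Malnormal

variable {G : Type*} [Group G] {B : Subgroup G}

/-- The subgroup `B` meets each of its conjugates by elements outside `B` trivially. -/
def IsMalnormal (B : Subgroup G) : Prop :=
  ∀ g ∉ B, B ⊓ B.map (MulAut.conj g).toMonoidHom = ⊥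

theorem IsMalnormal.mem_of_conj_mem (hB : IsMalnormal B) {b t : G} (hb : b ∈ B) (hb_ne : b ≠ 1)
    (h : t * b * t⁻¹ ∈ B) : t ∈ B := by
  by_contra ht
  have : t * b * t⁻¹ ∈ B ⊓ B.map (MulAut.conj t).toMonoidHom := ⟨h, b, hb, rfl⟩
  rw [hB t ht, Subgroup.mem_bot, conj_eq_one_iff] at this
  exact hb_ne this

theorem IsMalnormal.mem_of_commute (hB : IsMalnormal B) {b x : G} (hb : b ∈ B) (hb_ne : b ≠ 1)
    (h : Commute x b) : x ∈ B :=
  hB.mem_of_conj_mem hb hb_ne (by rwa [h.eq, mul_inv_cancel_right])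

variable (B) in
/-- The Frobenius kernel `G \ ⋃ (Bᵍ \ {1})`, as a set. -/
def frobeniusKernelSet : Set G :=
  {x | ∀ t : G, t * x * t⁻¹ ∈ B → x = 1}

theorem eq_one_of_mem_frobeniusKernelSet_of_mem {x : G} (hx : x ∈ frobeniusKernelSet B)
    (hxB : x ∈ B) : x = 1 :=
  hx 1 (by simpa using hxB)

theorem coe_subset_frobeniusKernelSet {N : Subgroup G} [N.Normal] (h : N ⊓ B = ⊥) :
    (N : Set G) ⊆ frobeniusKernelSet B := fun x hx t ht ↦ by
  have : t * x * t⁻¹ ∈ N ⊓ B := ⟨Subgroup.Normal.conj_mem ‹_› x hx t, ht⟩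
  rwa [h, Subgroup.mem_bot, conj_eq_one_iff] at this

theorem IsMalnormal.zpow_mem_frobeniusKernelSet (hB : IsMalnormal B) {x : G}
    (hx : x ∈ frobeniusKernelSet B) (i : ℤ) : x ^ i ∈ frobeniusKernelSet B := fun t ht ↦ by
  by_contra hxi
  rw [← conj_zpow] at ht
  have : t * x * t⁻¹ ∈ B := hB.mem_of_commute ht (by rwa [conj_zpow, Ne, conj_eq_one_iff])
    ((Commute.refl _).zpow_right i)
  exact hxi (by rw [hx t this, one_zpow])

-- `G` is the union of the kernel set and the conjugates of `B \ {1}`, of which there are at most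
-- `B.index`, so the kernel set has at least `|B| * B.index - (|B| - 1) * B.index` elements.
theorem index_le_ncard_frobeniusKernelSet [Finite G] (B : Subgroup G) :
    B.index ≤ (frobeniusKernelSet B).ncard := by
  let conj : (G ⧸ B) × {b : B // b ≠ 1} → G := fun p ↦ p.1.out * p.2.1 * p.1.out⁻¹
  have cover : Set.univ ⊆ frobeniusKernelSet B ∪ Set.range conj := fun x _ ↦ by
    refine or_iff_not_imp_left.2 fun hx ↦ ?_
    obtain ⟨t, ht, hx_ne⟩ : ∃ t : G, t * x * t⁻¹ ∈ B ∧ x ≠ 1 := by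
      simpa [frobeniusKernelSet] using hx
    obtain ⟨b, hb⟩ := QuotientGroup.mk_out_eq_mul B t⁻¹
    let c : B := b⁻¹ * ⟨_, ht⟩ * b
    have conj_c : (t⁻¹ * b : G) * c * (t⁻¹ * b : G)⁻¹ = x := by
      simp [c, mul_assoc]
    refine ⟨⟨(t⁻¹ : G), c, fun hc ↦ hx_ne ?_⟩, ?_⟩
    · rw [← conj_c, hc, OneMemClass.coe_one, mul_one, mul_inv_cancel]
    · simpa only [conj, hb] using conj_c
  have card_ne_one : Nat.card {b : B // b ≠ 1} + 1 = Nat.card B := by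
    classical
    exact Finite.card_option.symm.trans (Nat.card_congr (Equiv.optionSubtypeNe 1))
  have card_le : Nat.card G ≤
      (frobeniusKernelSet B).ncard + B.index * Nat.card {b : B // b ≠ 1} := by
    rw [← Set.ncard_univ, Subgroup.index, ← Nat.card_prod]
    exact (Set.ncard_le_ncard cover).trans <| (Set.ncard_union_le _ _).trans <|
      Nat.add_le_add_left (Finite.card_range_le conj) _
  rw [← B.card_mul_index, ← card_ne_one, add_one_mul, mul_comm B.index, add_comm] at card_le
  exact Nat.add_le_add_iff_right.1 card_le

variable {k : Type*} [Field k] [Fintype G]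

theorem IsMalnormal.inducedFun_comp_subtype [CharZero k] (hB : IsMalnormal B) {f : B → k}
    (hf : IsClassFunction f) (hf_one : f 1 = 0) : inducedFun B f ∘ B.subtype = f := by
  have := Fintype.ofFinite B
  have extend_conj {b : B} {t : G} (ht : t ∈ B) :
      Function.extend B.subtype f 0 (t * b * t⁻¹) = f b :=
    (B.subtype_injective.extend_apply f 0 (⟨t, ht⟩ * b * ⟨t, ht⟩⁻¹)).trans (hf b ⟨t, ht⟩)
  have extend_conj_of_notMem {b : B} {t : G} (ht : t ∉ B) :
      Function.extend B.subtype f 0 (t * b * t⁻¹) = 0 := by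
    obtain rfl | hb := eq_or_ne b 1
    · rw [OneMemClass.coe_one, mul_one, mul_inv_cancel]
      exact (B.subtype_injective.extend_apply f 0 1).trans hf_one
    · refine Function.extend_apply' _ _ _ ?_
      rintro ⟨c, hc⟩
      exact ht (hB.mem_of_conj_mem b.2 (by simpa using hb) (hc ▸ c.2))
  funext b
  have sum_conj : ∑ t : G, Function.extend B.subtype f 0 (t * b * t⁻¹) = ∑ _t : B, f b :=
    (Fintype.sum_of_injective _ B.subtype_injective _ _
      (fun t ht ↦ extend_conj_of_notMem fun h ↦ ht ⟨⟨t, h⟩, rfl⟩)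
      fun t ↦ (extend_conj t.2).symm).symm
  rw [Function.comp_apply, inducedFun_apply, B.subtype_apply, sum_conj]
  simp

theorem inducedFun_eq_zero_of_mem_frobeniusKernelSet {f : B → k} (hf_one : f 1 = 0) {x : G}
    (hx : x ∈ frobeniusKernelSet B) : inducedFun B f x = 0 := by
  rw [inducedFun_apply, Finset.sum_eq_zero, mul_zero]
  intro t _
  by_cases ht : t * x * t⁻¹ ∈ B
  · rw [hx t ht, mul_one, mul_inv_cancel]
    exact (B.subtype_injective.extend_apply f 0 1).trans hf_one
  · exact Function.extend_apply' _ _ _ (by simpa using ht)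

variable (B) in
/-- The Frobenius extension of a class function `f` from `B` to `G`: the constant `f 1` is extended
by itself, and `f - f 1`, which vanishes at `1`, by induction. -/
noncomputable def frobeniusExtension (f : B → k) : G → k :=
  inducedFun B (f - f 1 • 1) + f 1 • 1

theorem isClassFunction_frobeniusExtension (f : B → k) :
    IsClassFunction (frobeniusExtension B f) := fun g t ↦
  congrArg (· + f 1 • (1 : k)) (isClassFunction_inducedFun _ g t)

theorem frobeniusExtension_of_mem_frobeniusKernelSet (f : B → k) {x : G}
    (hx : x ∈ frobeniusKernelSet B) : frobeniusExtension B f x = f 1 := by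
  rw [frobeniusExtension, Pi.add_apply,
    inducedFun_eq_zero_of_mem_frobeniusKernelSet (by simp) hx]
  simp

theorem IsMalnormal.frobeniusExtension_comp_subtype [CharZero k] (hB : IsMalnormal B) {f : B → k}
    (hf : IsClassFunction f) : frobeniusExtension B f ∘ B.subtype = f := by
  have isClassFunction_sub : IsClassFunction (f - f 1 • 1) := fun b c ↦
    congrArg (· - _) (hf b c)
  rw [frobeniusExtension, Pi.add_comp,
    hB.inducedFun_comp_subtype isClassFunction_sub (by simp)]
  exact sub_add_cancel f _

theorem charInner_frobeniusExtension_one [CharZero k] [Fintype B] (f : B → k) :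
    charInner (frobeniusExtension B f) 1 = charInner f 1 := by
  rw [frobeniusExtension, map_add, LinearMap.add_apply, charInner_inducedFun _ fun _ _ ↦ rfl]
  simp [charInner_one_one]

theorem IsMalnormal.charInner_frobeniusExtension [CharZero k] [Fintype B] (hB : IsMalnormal B)
    (f : B → k) {h : B → k} (hh : IsClassFunction h) :
    charInner (frobeniusExtension B f) (frobeniusExtension B h) = charInner f h := by
  have one_left : charInner 1 (frobeniusExtension B h) = charInner 1 h := by
    rw [charInner_comm, charInner_frobeniusExtension_one, charInner_comm]
  conv_lhs => arg 1; rw [frobeniusExtension]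
  rw [map_add, LinearMap.add_apply,
    charInner_inducedFun _ (isClassFunction_frobeniusExtension h),
    hB.frobeniusExtension_comp_subtype hh]
  simp [one_left]

theorem IsCharacter.isVirtualCharacter_frobeniusExtension [CharZero k] {f : B → k}
    (hf : IsCharacter f) : IsVirtualCharacter (frobeniusExtension B f) := by
  obtain ⟨n, φ, rfl⟩ := hf
  have degree (H : Type _) : φ.character 1 • (1 : H → k) = n := by
    rw [char_one, finrank_fin_fun]
    exact funext fun _ ↦ mul_one _
  refine ⟨inducedFun B φ.character + n, inducedFun B n,
    (isCharacter_inducedFun ⟨n, φ, rfl⟩).add (isCharacter_natCast n),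
    isCharacter_inducedFun (isCharacter_natCast n), ?_⟩
  rw [frobeniusExtension, degree, degree, map_sub]
  abel

theorem IsMalnormal.isCharacter_frobeniusExtension [CharZero k] [Fintype B] (hB : IsMalnormal B)
    {f : B → k} (hf : IsCharacter f) (hnorm : charInner f f = 1) :
    IsCharacter (frobeniusExtension B f) := by
  obtain ⟨n, hn⟩ := hf.exists_apply_one_eq_natCast
  have f_one : frobeniusExtension B f 1 = n :=
    hn ▸ congrFun (hB.frobeniusExtension_comp_subtype hf.isClassFunction) 1
  refine hf.isVirtualCharacter_frobeniusExtension.isCharacter_of_apply_one ?_ f_one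
  rw [hB.charInner_frobeniusExtension _ hf.isClassFunction, hnorm]

end Malnormal

section Kernel

variable {G : Type*} [Group G] [Finite G] {B : Subgroup G}

theorem IsMalnormal.exists_apply_ne_one_of_mem (k : Type*) [Field k] [IsAlgClosed k] [CharZero k]
    (hB : IsMalnormal B) {b : G} (hb : b ∈ B) (hb_ne : b ≠ 1) :
    ∃ (n : ℕ) (ρ : Representation k G (Fin n → k)),
      ρ b ≠ 1 ∧ ∀ x ∈ frobeniusKernelSet B, ρ x = 1 := by
  have := Fintype.ofFinite G
  have := Fintype.ofFinite B
  lift b to B using hb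
  obtain ⟨f, hf, hnorm, i, hi⟩ :=
    exists_isCharacter_charInner_self_eq_one_apply_zpow_ne (k := k) (g := b) (by simpa using hb_ne)
  obtain ⟨n, ρ, hρ⟩ := hB.isCharacter_frobeniusExtension hf hnorm
  have char_coe (c : B) : ρ.character c = f c :=
    hρ ▸ congrFun (hB.frobeniusExtension_comp_subtype hf.isClassFunction) c
  refine ⟨n, ρ, fun h ↦ hi ?_, fun x hx ↦ (apply_eq_one_iff_char_zpow ρ x).2 fun j ↦ ?_⟩
  · have := (apply_eq_one_iff_char_zpow ρ b).1 h i
    rwa [← B.coe_zpow, ← B.coe_one, char_coe, char_coe] at this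
  · rw [← B.coe_one, char_coe, hρ,
      frobeniusExtension_of_mem_frobeniusKernelSet f (hB.zpow_mem_frobeniusKernelSet hx j)]

theorem IsMalnormal.exists_normal_coe_eq_frobeniusKernelSet (hB : IsMalnormal B) :
    ∃ N : Subgroup G, N.Normal ∧ (N : Set G) = frobeniusKernelSet B := by
  let N := Subgroup.normalClosure (frobeniusKernelSet B)
  have N_inf_B : N ⊓ B = ⊥ := by
    refine (Subgroup.eq_bot_iff_forall _).2 fun b ⟨hbN, hb⟩ ↦ ?_
    by_contra hb_ne
    obtain ⟨n, ρ, hρb, hρ⟩ := hB.exists_apply_ne_one_of_mem ℂ hb hb_ne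
    have N_le_ker : N ≤ ρ.ker := Subgroup.normalClosure_le_normal hρ
    exact hρb (N_le_ker hbN)
  exact ⟨N, Subgroup.normalClosure_normal,
    (coe_subset_frobeniusKernelSet N_inf_B).antisymm Subgroup.subset_normalClosure⟩

theorem sup_eq_top_of_coe_eq_frobeniusKernelSet {N : Subgroup G}
    (hN : (N : Set G) = frobeniusKernelSet B) (hNB : Disjoint N B) : N ⊔ B = ⊤ := by
  have card_le : Nat.card N * Nat.card B ≤ Nat.card G := by
    rw [← Nat.card_prod]
    exact Nat.card_le_card_of_injective _ (Subgroup.mul_injective_of_disjoint hNB)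
  have card_ge : Nat.card G ≤ Nat.card N * Nat.card B := by
    rw [← B.index_mul_card]
    refine Nat.mul_le_mul_right _ ((index_le_ncard_frobeniusKernelSet B).trans_eq ?_)
    rw [← hN]
    rfl
  exact (Subgroup.isComplement'_of_card_mul_and_disjoint (card_le.antisymm card_ge) hNB).sup_eq_top

end Kernel

/-- Frobenius's theorem: if `B` is a proper nontrivial subgroup of a finite group `G`
with `B ∩ gBg⁻¹ = 1` for all `g ∉ B`, then there is a normal subgroup `N` with
`G = N ⋊ B` (i.e. `N ⊓ B = ⊥` and `N ⊔ B = ⊤`), and the conjugation action of `B` on `N`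
is fixed-point-free. -/
theorem frobenius_kernel_exists
    (G : Type*) [Group G] [Finite G] (B : Subgroup G)
    (hB_ne_bot : B ≠ ⊥) (hB_ne_top : B ≠ ⊤)
    (hmal : ∀ g : G, g ∉ B → B ⊓ (B.map (MulAut.conj g).toMonoidHom) = ⊥) :
    ∃ N : Subgroup G, N.Normal ∧ N ⊓ B = ⊥ ∧ N ⊔ B = ⊤ ∧
      ∀ b ∈ B, b ≠ 1 → ∀ x ∈ N, b * x * b⁻¹ = x → x = 1 := by
  have hB : IsMalnormal B := hmal
  obtain ⟨N, N_normal, hN⟩ := hB.exists_normal_coe_eq_frobeniusKernelSet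
  have eq_one {x : G} (hxN : x ∈ N) (hxB : x ∈ B) : x = 1 :=
    eq_one_of_mem_frobeniusKernelSet_of_mem (hN ▸ hxN) hxB
  have N_disjoint_B : Disjoint N B := Subgroup.disjoint_def.2 eq_one
  refine ⟨N, N_normal, N_disjoint_B.eq_bot,
    sup_eq_top_of_coe_eq_frobeniusKernelSet hN N_disjoint_B, fun b hb hb_ne x hx hbx ↦ ?_⟩
  have commute : Commute x b := (mul_inv_eq_iff_eq_mul.1 hbx).symm
  exact eq_one hx (hB.mem_of_commute hb hb_ne commute)
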